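/- The positive Munchausen numbers in base 4 are exactly 1, 29 and 55; that is, for n ≥ 1, n = P_4(n) if and only if n ∈ {1, 29, 55}. -/

import Mathlib

/-- Digit power sum: `P b n = Σ cᵢ^cᵢ` over the base-`b` digits of `n`, with `0^0 = 1`. -/
def P (b n : ℕ) : ℕ := ((Nat.digits b n).map (fun c => c ^ c)).sum

theorem P_zero : P 4 0 = 0 := by simp [P]

theorem P_rec (n : ℕ) (hn : 1 ≤ n) : P 4 n = (n % 4) ^ (n % 4) + P 4 (n / 4) := by
  unfold P
  rw [Nat.digits_def' (by norm_num) hn]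
  simp

theorem dig_le (n : ℕ) : (n % 4) ^ (n % 4) ≤ 27 := by
  have h : n % 4 < 4 := Nat.mod_lt _ (by norm_num)
  generalize n % 4 = r at h
  interval_cases r <;> norm_num

theorem P_step (n : ℕ) : P 4 n ≤ 27 + P 4 (n / 4) := by
  rcases Nat.eq_zero_or_pos n with h | h
  · subst h; simp [P_zero]
  · rw [P_rec n h]
    have := dig_le n
    omega

theorem P_lt (n : ℕ) (hn : 128 ≤ n) : P 4 n < n := by
  induction n using Nat.strong_induction_on with
  | _ n ih =>
    have h1 := P_step n
    by_cases h : 128 ≤ n / 4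
    · have := ih (n / 4) (by omega) h
      omega
    · have h2 := P_step (n / 4)
      have h3 := P_step (n / 4 / 4)
      have h4 := P_step (n / 4 / 4 / 4)
      have h5 := P_step (n / 4 / 4 / 4 / 4)
      have e : n / 4 / 4 / 4 / 4 / 4 = 0 := by omega
      rw [e, P_zero] at h5
      by_cases h6 : n < 256
      · have e : n / 4 / 4 / 4 / 4 = 0 := by omega
        rw [e, P_zero] at h4
        omega
      · omega

theorem munchausen_base4 (n : ℕ) (hn : 1 ≤ n) :
    n = P 4 n ↔ n ∈ ({1, 29, 55} : Set ℕ) := by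
  simp only [Set.mem_insert_iff, Set.mem_singleton_iff]
  by_cases h : 128 ≤ n
  · have := P_lt n h
    omega
  · have h : n < 128 := by omega
    interval_cases n <;> norm_num [P]
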